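/- Two Cauchy sequences (x⁽ⁿ⁾) and (y⁽ⁿ⁾) of rational numbers are equivalent (≈) if and only if the upper limit of (ι(x⁽ⁿ⁾)) in (𝓡,⪯) is equivalent in 𝓡 to the upper limit of (ι(y⁽ⁿ⁾)), where the upper limit of a bounded sequence (z⁽ⁿ⁾) in 𝓡 is inf{ sup{z⁽ᵏ⁾ : k ≥ n} : n ∈ ℕ }. -/

import Mathlib

/-- The ambient space `𝓡` of decimal representations: an integer part together
with a sequence of digits in `{0,…,9}`. -/
abbrev DecimalRep := ℤ × (ℕ → Fin 10)

namespace DecimalRep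

open scoped Classical

/-- The truncation `[x]_k = x₀ + ∑_{i=1}^k x_i / 10^i` of `x` up to the `k`-th
digit, as a rational number. -/
def trunc (x : DecimalRep) (k : ℕ) : ℚ :=
  (x.1 : ℚ) + ∑ i ∈ Finset.range k, ((x.2 i : ℕ) : ℚ) / 10 ^ (i + 1)

/-- The order `⪯` on `𝓡`: `x ⪯ y` iff every truncation of `x` is at most the
corresponding truncation of `y`. -/
def le (x y : DecimalRep) : Prop := ∀ k : ℕ, trunc x k ≤ trunc y k

/-- The strict order `≺` on `𝓡`. -/
def lt (x y : DecimalRep) : Prop := le x y ∧ x ≠ y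

/-- Two decimal representations are equivalent ("have no gap") iff there is no
third element lying between them. -/
def equiv (x y : DecimalRep) : Prop :=
  ¬ ∃ z : DecimalRep, z ≠ x ∧ z ≠ y ∧
      ((le x z ∧ le z y) ∨ (le y z ∧ le z x))

/-- `𝓡₉`: decimal representations ending in an infinite string of nines. -/
def allNines (x : DecimalRep) : Prop := ∃ N : ℕ, ∀ k ≥ N, x.2 k = 9

/-- `ℚ_F`: decimal representations ending in an infinite string of zeros. -/
def finiteDec (x : DecimalRep) : Prop := ∃ N : ℕ, ∀ k ≥ N, x.2 k = 0

/-- The decimal expansion map `ι : ℚ → 𝓡`, satisfying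
`[ι(α)]_k = ⌊10^k·α⌋/10^k` for all `k`. -/
def iota (α : ℚ) : DecimalRep :=
  (⌊α⌋, fun k => ⟨(⌊α * 10 ^ (k + 1)⌋ % 10).toNat, by
    have h1 : (0 : ℤ) ≤ ⌊α * 10 ^ (k + 1)⌋ % 10 := Int.emod_nonneg _ (by norm_num)
    have h2 : ⌊α * 10 ^ (k + 1)⌋ % 10 < 10 := Int.emod_lt_of_pos _ (by norm_num)
    omega⟩)

/-- `M` is a least upper bound of `W` in `(𝓡,⪯)`. -/
def IsLub (W : Set DecimalRep) (M : DecimalRep) : Prop :=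
  (∀ w ∈ W, le w M) ∧ ∀ M' : DecimalRep, (∀ w ∈ W, le w M') → le M M'

/-- `M` is a greatest lower bound of `W` in `(𝓡,⪯)`. -/
def IsGlb (W : Set DecimalRep) (M : DecimalRep) : Prop :=
  (∀ w ∈ W, le M w) ∧ ∀ M' : DecimalRep, (∀ w ∈ W, le M' w) → le M' M

/-- The least upper bound of a set in `(𝓡,⪯)` (junk value if none exists). -/
noncomputable def sup (W : Set DecimalRep) : DecimalRep :=
  if h : ∃ M, IsLub W M then h.choose else default

/-- The greatest lower bound of a set in `(𝓡,⪯)` (junk value if none exists). -/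
noncomputable def inf (W : Set DecimalRep) : DecimalRep :=
  if h : ∃ M, IsGlb W M then h.choose else default

/-- Addition `x ⊕ y := sup {ι([x]_k + [y]_k) : k ∈ ℕ}` on `𝓡`. -/
noncomputable def add (x y : DecimalRep) : DecimalRep :=
  sup { z | ∃ k : ℕ, z = iota (trunc x k + trunc y k) }

/-- The "additive inverse" map `Ψ(x₀.x₁x₂⋯) = (−1−x₀).(9−x₁)(9−x₂)⋯`. -/
def psi (x : DecimalRep) : DecimalRep :=
  (-1 - x.1, fun k => ⟨9 - (x.2 k).val, by have := (x.2 k).isLt; omega⟩)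

/-- The signal map: `0` on the nonnegative part, `1` on the negative part. -/
noncomputable def sign (x : DecimalRep) : ℕ :=
  if le (iota 0) x then 0 else 1

/-- The absolute value `‖x‖ := max {x, Ψ(x)}` with respect to `⪯`. -/
noncomputable def norm (x : DecimalRep) : DecimalRep :=
  if le x (psi x) then psi x else x

/-- Multiplication
`x ⊗ y := Ψ^(sign x + sign y) (sup {ι([‖x‖]_k · [‖y‖]_k) : k ∈ ℕ})` on `𝓡`. -/
noncomputable def mul (x y : DecimalRep) : DecimalRep :=
  psi^[sign x + sign y]
    (sup { z | ∃ k : ℕ, z = iota (trunc (norm x) k * trunc (norm y) k) })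

/-- The multiplicative inverse
`x⁻¹ := Ψ^(sign x) (inf {ι(1/[‖x‖]_k) : k ∈ ℕ, [‖x‖]_k > 0})`. -/
noncomputable def inv (x : DecimalRep) : DecimalRep :=
  psi^[sign x]
    (inf { z | ∃ k : ℕ, 0 < trunc (norm x) k ∧ z = iota (1 / trunc (norm x) k) })

/-- A sequence of rationals is Cauchy. -/
def IsCauchy (x : ℕ → ℚ) : Prop :=
  ∀ ε : ℚ, 0 < ε → ∃ N : ℕ, ∀ m n : ℕ, N ≤ m → N ≤ n → |x m - x n| < ε

/-- The upper limit `inf { sup {f k : k ≥ n} : n ∈ ℕ }` of a sequence in `𝓡`. -/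
noncomputable def upperLimit (f : ℕ → DecimalRep) : DecimalRep :=
  inf { z | ∃ n : ℕ, z = sup { w | ∃ k : ℕ, n ≤ k ∧ w = f k } }

/-- The lower limit `sup { inf {f k : k ≥ n} : n ∈ ℕ }` of a sequence in `𝓡`. -/
noncomputable def lowerLimit (f : ℕ → DecimalRep) : DecimalRep :=
  sup { z | ∃ n : ℕ, z = inf { w | ∃ k : ℕ, n ≤ k ∧ w = f k } }

end DecimalRep

/-!
Everything is read off from the real number represented by a decimal representation. The evaluation
map `𝓡 → ℝ` is monotone and sends `ι q` to `q`. Two distinct representations of the same real have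
nothing between them, since two strict steps in the order separate some truncation by `2 / 10 ^ k`,
while a truncation is within `1 / 10 ^ k` of the value; conversely, between two different values
lies a rational, whose expansion fills the gap. So the equivalence of `𝓡` is equality of values.
Density of `ℚ` also makes evaluation compatible with suprema and infima, hence with upper limits,
and the upper limit of `ι ∘ x` for a Cauchy sequence `x` evaluates to the real number that `x`
defines.
-/

open Filter Set Topology

theorem limsup_atTop_eq_of_isLUB_of_isGLB {ι α : Type*} [Nonempty ι] [Preorder ι]
    [IsDirectedOrder ι] [ConditionallyCompleteLattice α] {u s : ι → α} {L : α}
    (hs : ∀ n, IsLUB (u '' Ici n) (s n)) (hL : IsGLB (range s) L) :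
    limsup u atTop = L := by
  have eventual_bounds : {a | ∀ᶠ n in atTop, u n ≤ a} = ⋃ n, Ici (s n) := by
    ext a
    simp only [mem_ofPred_eq, eventually_atTop, mem_iUnion, mem_Ici, isLUB_le_iff (hs _),
      mem_upperBounds, forall_mem_image]
  have hglb : IsGLB (⋃ n, Ici (s n)) L :=
    ⟨fun a ha => by
      obtain ⟨n, hn⟩ := mem_iUnion.1 ha
      exact (hL.1 ⟨n, rfl⟩).trans hn,
    fun b hb => hL.2 (forall_mem_range.2 fun n => hb (mem_iUnion.2 ⟨n, self_mem_Ici⟩))⟩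
  rw [limsup_eq, eventual_bounds]
  exact hglb.csInf_eq ⟨_, mem_iUnion.2 ⟨Classical.arbitrary ι, self_mem_Ici⟩⟩

theorem tendsto_ratCast_realMk (f : CauSeq ℚ abs) :
    Tendsto (fun n => (f n : ℝ)) atTop (𝓝 (Real.mk f)) := by
  refine Metric.tendsto_atTop'.2 fun ε hε => ?_
  obtain ⟨δ, hδ, hδε⟩ := exists_rat_btwn hε
  obtain ⟨N, hN⟩ := f.cauchy₂ (Rat.cast_pos.1 hδ)
  refine ⟨N, fun n hn => ?_⟩
  rw [dist_comm, Real.dist_eq]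
  refine (Real.mk_near_of_forall_near ⟨N, fun m hm => ?_⟩).trans_lt hδε
  exact_mod_cast (hN m hm n hn.le).le

namespace DecimalRep

variable {x y z : DecimalRep} {W : Set DecimalRep} {M : DecimalRep}

/-- The integer `10 ^ k * [x]_k`, defined by recursion on `k`; comparing truncations thereby
becomes comparing integers. -/
def scaledTrunc (x : DecimalRep) : ℕ → ℤ
  | 0 => x.1
  | k + 1 => 10 * scaledTrunc x k + (x.2 k : ℕ)

theorem trunc_eq_scaledTrunc_div (x : DecimalRep) (k : ℕ) :
    trunc x k = scaledTrunc x k / 10 ^ k := by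
  induction k with
  | zero => simp [trunc, scaledTrunc]
  | succ k ih =>
    rw [trunc] at ih ⊢
    rw [Finset.sum_range_succ, ← add_assoc, ih, scaledTrunc]
    push_cast
    field

theorem le_iff_scaledTrunc_le : le x y ↔ ∀ k, scaledTrunc x k ≤ scaledTrunc y k := by
  refine forall_congr' fun k => ?_
  rw [trunc_eq_scaledTrunc_div, trunc_eq_scaledTrunc_div,
    div_le_div_iff_of_pos_right (by positivity), Int.cast_le]

theorem scaledTrunc_succ_ediv_ten (x : DecimalRep) (k : ℕ) :
    scaledTrunc x (k + 1) / 10 = scaledTrunc x k := by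
  have := (x.2 k).isLt
  simp only [scaledTrunc]
  omega

theorem scaledTrunc_injective : Function.Injective scaledTrunc := by
  intro x y h
  refine Prod.ext (congrFun h 0) (funext fun k => Fin.ext ?_)
  have hk := congrFun h k
  have hk' := congrFun h (k + 1)
  simp only [scaledTrunc] at hk'
  omega

theorem exists_scaledTrunc_eq {a : ℕ → ℤ} (ha : ∀ k, a (k + 1) / 10 = a k) :
    ∃ x, scaledTrunc x = a := by
  refine ⟨(a 0, fun k => ⟨(a (k + 1) % 10).toNat, by omega⟩), funext fun k => ?_⟩
  induction k with
  | zero => rfl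
  | succ k ih =>
    have := ha k
    rw [scaledTrunc, ih]
    dsimp only
    omega

theorem scaledTrunc_lt_of_lt {j k : ℕ} (hkj : k ≤ j) (h : scaledTrunc x k < scaledTrunc y k) :
    scaledTrunc x j < scaledTrunc y j := by
  induction j, hkj using Nat.le_induction with
  | base => exact h
  | succ j _ ih =>
    rw [← scaledTrunc_succ_ediv_ten x, ← scaledTrunc_succ_ediv_ten y] at ih
    omega

theorem le_of_scaledTrunc_lt {k : ℕ} (h : scaledTrunc x k < scaledTrunc y k) : le x y := by
  refine le_iff_scaledTrunc_le.2 fun j => ?_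
  by_contra! hj
  exact (scaledTrunc_lt_of_lt (le_max_left k j) h).asymm
    (scaledTrunc_lt_of_lt (le_max_right k j) hj)

protected theorem le.antisymm (hxy : le x y) (hyx : le y x) : x = y :=
  scaledTrunc_injective <| funext fun k =>
    (le_iff_scaledTrunc_le.1 hxy k).antisymm (le_iff_scaledTrunc_le.1 hyx k)

theorem le.exists_scaledTrunc_lt (hxy : le x y) (hne : x ≠ y) :
    ∃ k, scaledTrunc x k < scaledTrunc y k := by
  by_contra! h
  exact hne (hxy.antisymm (le_iff_scaledTrunc_le.2 h))

protected theorem le_total (x y : DecimalRep) : le x y ∨ le y x := by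
  by_cases hxy : le x y
  · exact .inl hxy
  · rw [le_iff_scaledTrunc_le] at hxy
    push Not at hxy
    obtain ⟨k, hk⟩ := hxy
    exact .inr (le_of_scaledTrunc_lt hk)

/-- The real number represented by `x`, i.e. the limit of its truncations `[x]_k`. -/
noncomputable def toReal (x : DecimalRep) : ℝ :=
  x.1 + Real.ofDigits x.2

theorem toReal_eq_trunc_add (x : DecimalRep) (k : ℕ) :
    toReal x = trunc x k + (10 ^ k)⁻¹ * Real.ofDigits fun i => x.2 (i + k) := by
  rw [toReal, Real.ofDigits_eq_sum_add_ofDigits x.2 k, trunc]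
  simp [Real.ofDigitsTerm, div_eq_mul_inv, add_assoc]

theorem scaledTrunc_le_toReal_mul (x : DecimalRep) (k : ℕ) :
    scaledTrunc x k ≤ toReal x * 10 ^ k := by
  have tail_nonneg := Real.ofDigits_nonneg fun i => x.2 (i + k)
  rw [toReal_eq_trunc_add x k, trunc_eq_scaledTrunc_div]
  push_cast
  field_simp
  linarith

theorem toReal_mul_le_scaledTrunc_add_one (x : DecimalRep) (k : ℕ) :
    toReal x * 10 ^ k ≤ scaledTrunc x k + 1 := by
  have tail_le_one := Real.ofDigits_le_one fun i => x.2 (i + k)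
  rw [toReal_eq_trunc_add x k, trunc_eq_scaledTrunc_div]
  push_cast
  field_simp
  linarith

theorem tendsto_trunc_toReal (x : DecimalRep) :
    Tendsto (fun k => (trunc x k : ℝ)) atTop (𝓝 (toReal x)) := by
  have := (Real.summable_ofDigitsTerm (digits := x.2)).hasSum.tendsto_sum_nat.const_add (x.1 : ℝ)
  simpa [toReal, trunc, Real.ofDigits, Real.ofDigitsTerm, div_eq_mul_inv] using this

theorem le.toReal_le (h : le x y) : toReal x ≤ toReal y :=
  le_of_tendsto_of_tendsto' (tendsto_trunc_toReal x) (tendsto_trunc_toReal y)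
    fun k => Rat.cast_le.2 (h k)

theorem le_of_toReal_lt (h : toReal x < toReal y) : le x y :=
  (DecimalRep.le_total x y).resolve_right fun hyx => hyx.toReal_le.not_gt h

theorem iota_snd (q : ℚ) : (iota q).2 = Real.digits (Int.fract q : ℚ) 10 := by
  funext k
  have floor_mod_eq : ⌊q * 10 ^ (k + 1)⌋ % 10 = ⌊Int.fract q * 10 ^ (k + 1)⌋ % 10 := by
    have split : q * 10 ^ (k + 1) =
        Int.fract q * 10 ^ (k + 1) + ((10 * (⌊q⌋ * 10 ^ k) : ℤ) : ℚ) := by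
      push_cast
      rw [Int.fract]
      ring
    rw [split, Int.floor_add_intCast, Int.add_mul_emod_self_left]
  have natFloor_eq :
      (⌊((Int.fract q : ℚ) : ℝ) * (10 : ℕ) ^ (k + 1)⌋₊ : ℤ) = ⌊Int.fract q * 10 ^ (k + 1)⌋ := by
    have : (0 : ℝ) ≤ (Int.fract q : ℚ) := mod_cast Int.fract_nonneg q
    rw [Int.natCast_floor_eq_floor (by positivity), ← Rat.floor_cast (α := ℝ)]
    push_cast
    rfl
  ext
  simp only [iota, Real.digits, Fin.val_ofNat]
  omega

theorem toReal_iota (q : ℚ) : toReal (iota q) = q := by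
  have hfract : ((Int.fract q : ℚ) : ℝ) ∈ Ico 0 1 :=
    ⟨mod_cast Int.fract_nonneg q, mod_cast Int.fract_lt_one q⟩
  rw [toReal, iota_snd, Real.ofDigits_digits (by norm_num) hfract]
  exact_mod_cast Int.floor_add_fract q

theorem toReal_lt_of_between (hxz : le x z) (hzy : le z y) (hx : z ≠ x) (hy : z ≠ y) :
    toReal x < toReal y := by
  obtain ⟨i, hi⟩ := hxz.exists_scaledTrunc_lt hx.symm
  obtain ⟨j, hj⟩ := hzy.exists_scaledTrunc_lt hy
  set k := max i j
  have hxz : scaledTrunc x k < scaledTrunc z k := scaledTrunc_lt_of_lt (le_max_left i j) hi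
  have hzy : scaledTrunc z k < scaledTrunc y k := scaledTrunc_lt_of_lt (le_max_right i j) hj
  have gap : (scaledTrunc x k + 1 : ℝ) < scaledTrunc y k := by exact_mod_cast by omega
  refine lt_of_mul_lt_mul_right (a := (10 : ℝ) ^ k) ?_ (by positivity)
  calc toReal x * 10 ^ k ≤ scaledTrunc x k + 1 := toReal_mul_le_scaledTrunc_add_one x k
    _ < scaledTrunc y k := gap
    _ ≤ toReal y * 10 ^ k := scaledTrunc_le_toReal_mul y k

theorem exists_between_of_toReal_lt (h : toReal x < toReal y) :
    ∃ z, z ≠ x ∧ z ≠ y ∧ le x z ∧ le z y := by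
  obtain ⟨q, hxq, hqy⟩ := exists_rat_btwn h
  rw [← toReal_iota q] at hxq hqy
  exact ⟨iota q, ne_of_apply_ne toReal hxq.ne', ne_of_apply_ne toReal hqy.ne,
    le_of_toReal_lt hxq, le_of_toReal_lt hqy⟩

theorem equiv_iff_toReal_eq : equiv x y ↔ toReal x = toReal y := by
  constructor
  · intro h
    by_contra hne
    rcases lt_or_gt_of_ne hne with hlt | hlt
    · obtain ⟨z, hzx, hzy, hz⟩ := exists_between_of_toReal_lt hlt
      exact h ⟨z, hzx, hzy, .inl hz⟩
    · obtain ⟨z, hzy, hzx, hz⟩ := exists_between_of_toReal_lt hlt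
      exact h ⟨z, hzx, hzy, .inr hz⟩
  · rintro heq ⟨z, hzx, hzy, ⟨hxz, hzy'⟩ | ⟨hyz, hzx'⟩⟩
    · exact (toReal_lt_of_between hxz hzy' hzx hzy).ne heq
    · exact (toReal_lt_of_between hyz hzx' hzy hzx).ne' heq

theorem exists_isLub (hW : W.Nonempty) {B : DecimalRep} (hB : ∀ w ∈ W, le w B) :
    ∃ M, IsLub W M := by
  have hbdd (k : ℕ) : BddAbove ((scaledTrunc · k) '' W) :=
    ⟨scaledTrunc B k, forall_mem_image.2 fun w hw => le_iff_scaledTrunc_le.1 (hB w hw) k⟩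
  have hmax (k : ℕ) : ∃ a, IsGreatest ((scaledTrunc · k) '' W) a :=
    ⟨_, Int.csSup_mem (hW.image _) (hbdd k), fun _ => le_csSup (hbdd k)⟩
  choose a ha using hmax
  have coherent (k : ℕ) : a (k + 1) / 10 = a k := by
    have hmono : Monotone (· / 10 : ℤ → ℤ) := fun _ _ h => Int.ediv_le_ediv (by norm_num) h
    have := hmono.map_isGreatest (ha (k + 1))
    simp only [image_image, scaledTrunc_succ_ediv_ten] at this
    exact this.unique (ha k)
  obtain ⟨M, rfl⟩ := exists_scaledTrunc_eq coherent
  refine ⟨M, fun w hw => le_iff_scaledTrunc_le.2 fun k => (ha k).2 (mem_image_of_mem _ hw),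
    fun M' hM' => le_iff_scaledTrunc_le.2 fun k => ?_⟩
  obtain ⟨w, hw, hwM⟩ := (ha k).1
  exact hwM.ge.trans (le_iff_scaledTrunc_le.1 (hM' w hw) k)

theorem exists_isGlb (hW : W.Nonempty) {B : DecimalRep} (hB : ∀ w ∈ W, le B w) :
    ∃ M, IsGlb W M := by
  obtain ⟨w₀, hw₀⟩ := hW
  obtain ⟨M, hub, hleast⟩ :=
    exists_isLub (W := {m | ∀ w ∈ W, le m w}) ⟨B, hB⟩ fun m hm => hm w₀ hw₀
  exact ⟨M, fun w hw => hleast w fun m hm => hm w hw, hub⟩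

theorem IsLub.isLUB_toReal (h : IsLub W M) : IsLUB (toReal '' W) (toReal M) := by
  refine ⟨forall_mem_image.2 fun w hw => (h.1 w hw).toReal_le, fun b hb => ?_⟩
  by_contra! hbM
  obtain ⟨q, hbq, hqM⟩ := exists_rat_btwn hbM
  rw [← toReal_iota q] at hbq hqM
  have hMq : le M (iota q) :=
    h.2 _ fun w hw => le_of_toReal_lt ((hb (mem_image_of_mem _ hw)).trans_lt hbq)
  exact hMq.toReal_le.not_gt hqM

theorem IsGlb.isGLB_toReal (h : IsGlb W M) : IsGLB (toReal '' W) (toReal M) := by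
  refine ⟨forall_mem_image.2 fun w hw => (h.1 w hw).toReal_le, fun b hb => ?_⟩
  by_contra! hMb
  obtain ⟨q, hMq, hqb⟩ := exists_rat_btwn hMb
  rw [← toReal_iota q] at hMq hqb
  have hqM : le (iota q) M :=
    h.2 _ fun w hw => le_of_toReal_lt (hqb.trans_le (hb (mem_image_of_mem _ hw)))
  exact hqM.toReal_le.not_gt hMq

theorem isLUB_toReal_sup (hW : W.Nonempty) (hbdd : BddAbove (toReal '' W)) :
    IsLUB (toReal '' W) (toReal (sup W)) := by
  obtain ⟨b, hb⟩ := hbdd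
  obtain ⟨q, hbq⟩ := exists_rat_gt b
  rw [← toReal_iota q] at hbq
  have hex : ∃ M, IsLub W M :=
    exists_isLub hW fun w hw => le_of_toReal_lt ((hb (mem_image_of_mem _ hw)).trans_lt hbq)
  rw [sup, dif_pos hex]
  exact hex.choose_spec.isLUB_toReal

theorem isGLB_toReal_inf (hW : W.Nonempty) (hbdd : BddBelow (toReal '' W)) :
    IsGLB (toReal '' W) (toReal (inf W)) := by
  obtain ⟨b, hb⟩ := hbdd
  obtain ⟨q, hqb⟩ := exists_rat_lt b
  rw [← toReal_iota q] at hqb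
  have hex : ∃ M, IsGlb W M :=
    exists_isGlb hW fun w hw => le_of_toReal_lt (hqb.trans_le (hb (mem_image_of_mem _ hw)))
  rw [inf, dif_pos hex]
  exact hex.choose_spec.isGLB_toReal

theorem toReal_upperLimit {f : ℕ → DecimalRep} (habove : BddAbove (range (toReal ∘ f)))
    (hbelow : BddBelow (range (toReal ∘ f))) :
    toReal (upperLimit f) = limsup (toReal ∘ f) atTop := by
  have tail_eq (n : ℕ) : {w | ∃ k, n ≤ k ∧ w = f k} = f '' Ici n := by
    ext w
    simp only [mem_ofPred_eq, mem_image, mem_Ici, eq_comm]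
  have isLUB_tail (n : ℕ) : IsLUB ((toReal ∘ f) '' Ici n) (toReal (sup (f '' Ici n))) := by
    rw [image_comp]
    refine isLUB_toReal_sup (nonempty_Ici.image f) (habove.mono ?_)
    rw [← image_comp]
    exact image_subset_range _ _
  have hbelow_tail : BddBelow (range fun n => toReal (sup (f '' Ici n))) := by
    obtain ⟨b, hb⟩ := hbelow
    exact ⟨b, forall_mem_range.2 fun n =>
      (hb (mem_range_self n)).trans ((isLUB_tail n).1 (mem_image_of_mem _ self_mem_Ici))⟩
  have upperLimit_eq : upperLimit f = inf (range fun n => sup (f '' Ici n)) := by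
    simp only [upperLimit, tail_eq, range, eq_comm]
  refine (limsup_atTop_eq_of_isLUB_of_isGLB isLUB_tail ?_).symm
  rw [upperLimit_eq]
  have := isGLB_toReal_inf (range_nonempty fun n => sup (f '' Ici n))
    (by rwa [← range_comp])
  rwa [← range_comp] at this

/-- A Cauchy sequence of rationals as an element of `CauSeq ℚ abs`, the type whose quotient
is `ℝ`. -/
def IsCauchy.toCauSeq {u : ℕ → ℚ} (hu : IsCauchy u) : CauSeq ℚ abs :=
  ⟨u, fun ε hε => (hu ε hε).imp fun N hN n hn => hN n N hn le_rfl⟩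

theorem toReal_upperLimit_iota {u : ℕ → ℚ} (hu : IsCauchy u) :
    toReal (upperLimit fun n => iota (u n)) = Real.mk hu.toCauSeq := by
  have hlim : Tendsto (toReal ∘ fun n => iota (u n)) atTop (𝓝 (Real.mk hu.toCauSeq)) := by
    simpa only [Function.comp_def, toReal_iota] using! tendsto_ratCast_realMk hu.toCauSeq
  rw [toReal_upperLimit hlim.bddAbove_range hlim.bddBelow_range, hlim.limsup_eq]

end DecimalRep

open DecimalRep in
/-- Two Cauchy sequences of rationals are equivalent iff the upper limits of
their decimal expansions are equivalent in `𝓡`. -/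
theorem cauchy_equiv_iff_upperLimit_equiv (x y : ℕ → ℚ)
    (hx : IsCauchy x) (hy : IsCauchy y) :
    (∀ ε : ℚ, 0 < ε → ∃ N : ℕ, ∀ n : ℕ, N ≤ n → |x n - y n| < ε) ↔
      equiv (upperLimit fun n => iota (x n)) (upperLimit fun n => iota (y n)) := by
  rw [equiv_iff_toReal_eq, toReal_upperLimit_iota hx, toReal_upperLimit_iota hy, Real.mk_eq]
  -- `≈` on `CauSeq ℚ abs` unfolds to the left-hand side.
  exact Iff.rfl
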